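/- Let (X,Σ,m) be a σ-finite measure space, B a separable Banach space, and E a Banach B-bundle over X. Suppose there exists, for each ε ∈ (0,2], a constant c(ε) > 0 such that δ_{E(x)}(ε) ≥ c(ε) for m-a.e. x ∈ X. Then for every p ∈ (1,∞) the section space Γ_p(E) is a uniformly convex Banach space. Conversely, if Γ_p(E) is uniformly convex for some p ∈ (1,∞), then ess inf_x δ_{E(x)}(ε) > 0 for every ε ∈ (0,2] (so in particular m-a.e. fiber is uniformly convex). -/

import Mathlib

open MeasureTheory
open scoped ENNReal

/-- A *Banach `B`-bundle* over a measurable space `X`: a weakly measurable multivalued map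
whose values are closed linear subspaces of `B`. -/
structure BanachBundle (X : Type*) [MeasurableSpace X]
    (B : Type*) [NormedAddCommGroup B] [NormedSpace ℝ B] where
  fiber : X → Submodule ℝ B
  isClosed_fiber : ∀ x, IsClosed (fiber x : Set B)
  weaklyMeasurable : ∀ U : Set B, IsOpen U →
    MeasurableSet {x | ((fiber x : Set B) ∩ U).Nonempty}

/-- The space `Γ_p(E)` of `L^p`-sections of a Banach bundle `E`, realized as the subspace of
`L^p(m;B)` of elements whose representatives take values in the fibers `m`-a.e. -/
noncomputable def BanachBundle.sections {X B : Type*} [MeasurableSpace X]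
    [NormedAddCommGroup B] [NormedSpace ℝ B]
    (m : Measure X) (p : ℝ≥0∞) [Fact (1 ≤ p)] (E : BanachBundle X B) :
    Submodule ℝ (Lp B p m) where
  carrier := {f | ∀ᵐ x ∂m, (f : X → B) x ∈ E.fiber x}
  zero_mem' := by
    filter_upwards [Lp.coeFn_zero B p m] with x hx
    show (((0 : Lp B p m) : X → B)) x ∈ E.fiber x
    rw [hx]
    exact (E.fiber x).zero_mem
  add_mem' := by
    intro f g hf hg
    filter_upwards [hf, hg, Lp.coeFn_add f g] with x h1 h2 h3
    show (((f + g : Lp B p m) : X → B)) x ∈ E.fiber x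
    rw [h3]
    exact (E.fiber x).add_mem h1 h2
  smul_mem' := by
    intro c f hf
    filter_upwards [hf, Lp.coeFn_smul c f] with x h1 h2
    show (((c • f : Lp B p m) : X → B)) x ∈ E.fiber x
    rw [h2]
    exact (E.fiber x).smul_mem c h1

/-- The modulus of convexity of a normed space `V`. -/
noncomputable def modulusOfConvexity (V : Type*) [NormedAddCommGroup V] [Module ℝ V]
    (ε : ℝ) : ℝ :=
  sInf {r : ℝ | ∃ v w : V, ‖v‖ = 1 ∧ ‖w‖ = 1 ∧ ε ≤ ‖v - w‖ ∧ r = 1 - ‖(2 : ℝ)⁻¹ • (v + w)‖}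

/-- The modulus of convexity of a subset `S` (a fiber of a bundle), with the convention that
the infimum over the empty family equals `1`. -/
noncomputable def fiberModulus {B : Type*} [NormedAddCommGroup B] (S : Set B) (ε : ℝ) : ℝ :=
  sInf (insert 1 {r : ℝ | ∃ v ∈ S, ∃ w ∈ S,
    ‖v‖ = 1 ∧ ‖w‖ = 1 ∧ ε ≤ ‖v - w‖ ∧ r = 1 - ‖v + w‖ / 2})

/-!
If the moduli of convexity of the fibers are bounded below by `c(ε)`, every fiber satisfies the
two-point inequality
`(‖v + w‖ / 2) ^ q + κ ‖v - w‖ ^ q ≤ (1 / 2 + κ t ^ q) (‖v‖ ^ q + ‖w‖ ^ q)`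
with the same `κ`, for `t > 0` as small as desired. For `q = p` this inequality is linear in
`p`-th powers of norms, so it integrates to the same inequality for sections, which forces uniform
convexity.

Conversely, let `v`, `w` be unit vectors of `B` violating a slightly relaxed form of the uniform
convexity estimate of `Γ_p(E)`. If the fibers met small balls around `v` and `w` on a set `A` of
finite positive measure, sections selected measurably from these balls would be close to the
constants `v` and `w` on `A`; as `u ↦ m(A) ^ (-1/p) 1_A u` is an isometry, this contradicts the
estimate in `Γ_p(E)`. Hence almost no fiber comes near such a pair, simultaneously for all pairs
from a countable dense subset of the unit sphere.
-/

open NormedSpace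

theorem norm_add_le_norm_add_add_norm_sub {V : Type*} [SeminormedAddCommGroup V]
    (v w v' w' : V) : ‖v + w‖ ≤ ‖v' + w'‖ + ‖v - v'‖ + ‖w - w'‖ :=
  calc ‖v + w‖ = ‖(v' + w') + (v - v') + (w - w')‖ := by congr 1; abel
    _ ≤ ‖v' + w'‖ + ‖v - v'‖ + ‖w - w'‖ := norm_add₃_le

theorem norm_sub_le_norm_sub_add_norm_sub_add_norm_sub {V : Type*} [SeminormedAddCommGroup V]
    (v w v' w' : V) : ‖v - w‖ ≤ ‖v' - w'‖ + ‖v - v'‖ + ‖w - w'‖ := by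
  simpa only [dist_eq_norm, norm_sub_rev w w', add_right_comm, add_comm ‖v - v'‖] using
    dist_triangle4 v v' w' w

section Normalize

variable {V : Type*} [NormedAddCommGroup V] [NormedSpace ℝ V]

theorem norm_normalize_le_one (v : V) : ‖normalize v‖ ≤ 1 := by
  rcases eq_or_ne v 0 with rfl | hv
  · simp
  · exact (norm_normalize hv).le

theorem norm_normalize_sub_self {v : V} (hv : v ≠ 0) : ‖normalize v - v‖ = |1 - ‖v‖| := by
  have h : normalize v - v = (1 - ‖v‖) • normalize v := by
    rw [sub_smul, one_smul, norm_smul_normalize]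
  rw [h, norm_smul, norm_normalize hv, mul_one, Real.norm_eq_abs]

theorem norm_normalize_sub_le {v u : V} (hu : ‖u‖ = 1) : ‖normalize v - u‖ ≤ 2 * ‖v - u‖ := by
  rcases eq_or_ne v 0 with rfl | hv
  · simp [hu]
  calc ‖normalize v - u‖ ≤ ‖normalize v - v‖ + ‖v - u‖ := norm_sub_le_norm_sub_add_norm_sub ..
    _ = |‖u‖ - ‖v‖| + ‖v - u‖ := by rw [norm_normalize_sub_self hv, hu]
    _ ≤ ‖v - u‖ + ‖v - u‖ := by
      gcongr
      rw [norm_sub_rev v u]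
      exact abs_norm_sub_norm_le u v
    _ = 2 * ‖v - u‖ := (two_mul _).symm

end Normalize

section Rpow

theorem half_add_rpow_le {q a b : ℝ} (hq : 1 ≤ q) (ha : 0 ≤ a) (hb : 0 ≤ b) :
    ((a + b) / 2) ^ q ≤ (a ^ q + b ^ q) / 2 := by
  have h := (convexOn_rpow hq).2 (Set.mem_Ici.2 ha) (Set.mem_Ici.2 hb) one_half_pos.le
    one_half_pos.le (add_halves 1)
  simp only [smul_eq_mul] at h
  calc ((a + b) / 2) ^ q = (1 / 2 * a + 1 / 2 * b) ^ q := by ring_nf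
    _ ≤ 1 / 2 * a ^ q + 1 / 2 * b ^ q := h
    _ = (a ^ q + b ^ q) / 2 := by ring

theorem half_one_add_rpow_lt {q b : ℝ} (hq : 1 < q) (hb : 0 ≤ b) (hb1 : b ≠ 1) :
    ((1 + b) / 2) ^ q < (1 + b ^ q) / 2 := by
  have h := (strictConvexOn_rpow hq).2 (Set.mem_Ici.2 zero_le_one) (Set.mem_Ici.2 hb)
    hb1.symm one_half_pos one_half_pos (add_halves 1)
  simp only [smul_eq_mul, Real.one_rpow] at h
  calc ((1 + b) / 2) ^ q = (1 / 2 * 1 + 1 / 2 * b) ^ q := by ring_nf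
    _ < 1 / 2 * 1 + 1 / 2 * b ^ q := h
    _ = (1 + b ^ q) / 2 := by ring

theorem exists_half_one_add_rpow_le_mul {q s : ℝ} (hq : 1 < q) (hs : s < 1) :
    ∃ μ > 0, ∀ b, 0 ≤ b → b ≤ s → ((1 + b) / 2) ^ q ≤ (1 - μ) * ((1 + b ^ q) / 2) := by
  have hcont : ContinuousOn (fun b : ℝ => (1 + b ^ q) / 2 - ((1 + b) / 2) ^ q)
      (Set.Icc 0 s) := by
    have hpow : Continuous fun b : ℝ => b ^ q := Real.continuous_rpow_const (by linarith)
    have hmid : Continuous fun b : ℝ => ((1 + b) / 2) ^ q := hpow.comp (by fun_prop)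
    exact (((continuous_const.add hpow).div_const 2).sub hmid).continuousOn
  obtain ⟨μ, hμ, hgap⟩ := isCompact_Icc.exists_forall_le' hcont fun b hb =>
    sub_pos.2 (half_one_add_rpow_lt hq hb.1 (hb.2.trans_lt hs).ne)
  refine ⟨μ, hμ, fun b hb hbs => ?_⟩
  have hbq : b ^ q ≤ 1 := Real.rpow_le_one hb (by linarith) (by linarith)
  nlinarith [hgap b ⟨hb, hbs⟩, mul_nonneg hμ.le (sub_nonneg.2 hbq)]

end Rpow

section PointwiseGap

variable {B : Type*} [NormedAddCommGroup B]

theorem le_fiberModulus_iff {S : Set B} {ε c : ℝ} :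
    c ≤ fiberModulus S ε ↔ c ≤ 1 ∧ ∀ v ∈ S, ∀ w ∈ S,
      ‖v‖ = 1 → ‖w‖ = 1 → ε ≤ ‖v - w‖ → ‖v + w‖ ≤ 2 - 2 * c := by
  rw [fiberModulus, le_csInf_iff _ (Set.insert_nonempty _ _), Set.forall_mem_insert]
  · refine and_congr_right fun _ => ⟨fun h v hv w hw hv1 hw1 hvw => ?_, ?_⟩
    · linarith [h _ ⟨v, hv, w, hw, hv1, hw1, hvw, rfl⟩]
    · rintro h _ ⟨v, hv, w, hw, hv1, hw1, hvw, rfl⟩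
      linarith [h v hv w hw hv1 hw1 hvw]
  · refine ⟨0, ?_⟩
    rintro r (rfl | ⟨v, -, w, -, hv1, hw1, -, rfl⟩)
    · exact zero_le_one
    · linarith [norm_add_le v w]

theorem half_norm_add_rpow_le {q : ℝ} (hq : 1 ≤ q) (v w : B) :
    (‖v + w‖ / 2) ^ q ≤ (‖v‖ ^ q + ‖w‖ ^ q) / 2 :=
  calc (‖v + w‖ / 2) ^ q ≤ ((‖v‖ + ‖w‖) / 2) ^ q := by gcongr; exact norm_add_le v w
    _ ≤ (‖v‖ ^ q + ‖w‖ ^ q) / 2 := half_add_rpow_le hq (norm_nonneg v) (norm_nonneg w)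

theorem max_norm_rpow_le {q : ℝ} (v w : B) : max ‖v‖ ‖w‖ ^ q ≤ ‖v‖ ^ q + ‖w‖ ^ q := by
  rcases max_choice ‖v‖ ‖w‖ with h | h <;> rw [h]
  · exact le_add_of_nonneg_right (by positivity)
  · exact le_add_of_nonneg_left (by positivity)

variable [NormedSpace ℝ B]

theorem norm_add_le_of_le_fiberModulus {S : Submodule ℝ B} {ε c : ℝ}
    (hS : c ≤ fiberModulus (S : Set B) ε) {v w : B} (hv : v ∈ S) (hw : w ∈ S) (hv1 : ‖v‖ = 1)
    (hw0 : w ≠ 0) (hw1 : ‖w‖ ≤ 1) (hvw : ε ≤ ‖v - normalize w‖) :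
    ‖v + w‖ ≤ 1 + ‖w‖ - 2 * c * ‖w‖ := by
  have hdecomp : v + w = (1 - ‖w‖) • v + ‖w‖ • (v + normalize w) := by
    rw [smul_add, norm_smul_normalize, sub_smul, one_smul]
    abel
  have hsum : ‖v + normalize w‖ ≤ 2 - 2 * c :=
    (le_fiberModulus_iff.1 hS).2 v hv _ (S.smul_mem _ hw) hv1 (norm_normalize hw0) hvw
  calc ‖v + w‖ ≤ ‖(1 - ‖w‖) • v‖ + ‖‖w‖ • (v + normalize w)‖ := by
        rw [hdecomp]
        exact norm_add_le _ _
    _ = (1 - ‖w‖) + ‖w‖ * ‖v + normalize w‖ := by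
        rw [norm_smul_of_nonneg (sub_nonneg.2 hw1), norm_smul_of_nonneg (norm_nonneg w), hv1,
          mul_one]
    _ ≤ (1 - ‖w‖) + ‖w‖ * (2 - 2 * c) := by gcongr
    _ = 1 + ‖w‖ - 2 * c * ‖w‖ := by ring

variable {q t c : ℝ}

theorem half_norm_add_rpow_le_of_lt_norm (hq : 1 ≤ q) (ht1 : t ≤ 1) (hc : 0 < c)
    {S : Submodule ℝ B} (hS : c ≤ fiberModulus (S : Set B) (t / 2)) {v w : B} (hv : v ∈ S)
    (hw : w ∈ S) (hv1 : ‖v‖ = 1) (hw1 : ‖w‖ ≤ 1) (hvw : t ≤ ‖v - w‖) (htw : 1 - t / 2 < ‖w‖) :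
    (‖v + w‖ / 2) ^ q ≤ (1 - c / 2) * ((1 + ‖w‖ ^ q) / 2) := by
  have hw0 : w ≠ 0 := norm_pos_iff.1 (by linarith)
  have hc1 : c ≤ 1 := (le_fiberModulus_iff.1 hS).1
  have hsep : t / 2 ≤ ‖v - normalize w‖ := by
    have htri := norm_sub_le_norm_sub_add_norm_sub v (normalize w) w
    rw [norm_normalize_sub_self hw0, abs_of_nonneg (sub_nonneg.2 hw1)] at htri
    linarith
  have hmid : ‖v + w‖ / 2 ≤ (1 - c / 2) * ((1 + ‖w‖) / 2) := by
    have hadd := norm_add_le_of_le_fiberModulus hS hv hw hv1 hw0 hw1 hsep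
    nlinarith
  calc (‖v + w‖ / 2) ^ q ≤ ((1 - c / 2) * ((1 + ‖w‖) / 2)) ^ q := by gcongr
    _ = (1 - c / 2) ^ q * ((1 + ‖w‖) / 2) ^ q :=
        Real.mul_rpow (by linarith) (by positivity)
    _ ≤ (1 - c / 2) * ((1 + ‖w‖ ^ q) / 2) := by
        gcongr
        · linarith
        · exact Real.rpow_le_self_of_le_one (by linarith) (by linarith) hq
        · simpa using half_add_rpow_le hq zero_le_one (norm_nonneg w)

theorem exists_half_norm_add_rpow_le_of_norm_eq_one (hq : 1 < q) (ht : 0 < t) (ht1 : t ≤ 1)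
    (hc : 0 < c) :
    ∃ δ > 0, ∀ S : Submodule ℝ B, c ≤ fiberModulus (S : Set B) (t / 2) →
      ∀ v ∈ S, ∀ w ∈ S, ‖v‖ = 1 → ‖w‖ ≤ 1 → t ≤ ‖v - w‖ →
        (‖v + w‖ / 2) ^ q ≤ (1 - δ) * ((1 + ‖w‖ ^ q) / 2) := by
  obtain ⟨μ, hμ, hscalar⟩ := exists_half_one_add_rpow_le_mul hq (by linarith : 1 - t / 2 < 1)
  refine ⟨min μ (c / 2), lt_min hμ (half_pos hc), fun S hS v hv w hw hv1 hw1 hvw => ?_⟩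
  rcases le_or_gt ‖w‖ (1 - t / 2) with hshort | hlong
  · calc (‖v + w‖ / 2) ^ q ≤ ((1 + ‖w‖) / 2) ^ q := by gcongr; exact hv1 ▸ norm_add_le v w
      _ ≤ (1 - μ) * ((1 + ‖w‖ ^ q) / 2) := hscalar _ (norm_nonneg w) hshort
      _ ≤ _ := by gcongr; exact min_le_left _ _
  · calc (‖v + w‖ / 2) ^ q ≤ (1 - c / 2) * ((1 + ‖w‖ ^ q) / 2) :=
          half_norm_add_rpow_le_of_lt_norm hq.le ht1 hc hS hv hw hv1 hw1 hvw hlong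
      _ ≤ _ := by gcongr; exact min_le_right _ _

theorem exists_half_norm_add_rpow_le (hq : 1 < q) (ht : 0 < t) (ht1 : t ≤ 1) (hc : 0 < c) :
    ∃ δ > 0, ∀ S : Submodule ℝ B, c ≤ fiberModulus (S : Set B) (t / 2) →
      ∀ v ∈ S, ∀ w ∈ S, t * max ‖v‖ ‖w‖ ≤ ‖v - w‖ →
        (‖v + w‖ / 2) ^ q ≤ (1 - δ) * ((‖v‖ ^ q + ‖w‖ ^ q) / 2) := by
  obtain ⟨δ, hδ, hunit⟩ := exists_half_norm_add_rpow_le_of_norm_eq_one (B := B) hq ht ht1 hc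
  refine ⟨δ, hδ, fun S hS v hv w hw hvw => ?_⟩
  wlog hle : ‖w‖ ≤ ‖v‖ generalizing v w
  · rw [add_comm v w, add_comm (‖v‖ ^ q)]
    exact this w hw v hv (by rwa [max_comm, norm_sub_rev]) (not_le.1 hle).le
  rw [max_eq_left hle] at hvw
  rcases eq_or_ne v 0 with rfl | hv0
  · obtain rfl : w = 0 := norm_le_zero_iff.1 (hle.trans_eq norm_zero)
    simp [Real.zero_rpow (by linarith : q ≠ 0)]
  have ha : 0 < ‖v‖ := norm_pos_iff.2 hv0
  have hscale (u : B) : ‖‖v‖⁻¹ • u‖ = ‖u‖ / ‖v‖ := by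
    rw [norm_smul_of_nonneg (by positivity), inv_mul_eq_div]
  have hscaled := hunit S hS (‖v‖⁻¹ • v) (S.smul_mem _ hv) (‖v‖⁻¹ • w) (S.smul_mem _ hw)
    (by rw [hscale, div_self ha.ne']) (by rwa [hscale, div_le_one ha])
    (by rwa [← smul_sub, hscale, le_div_iff₀ ha])
  rw [← smul_add, hscale, hscale, div_right_comm, Real.div_rpow (by positivity) ha.le,
    Real.div_rpow (by positivity) ha.le, div_le_iff₀ (by positivity)] at hscaled
  refine hscaled.trans_eq ?_
  field_simp

/-- Two vectors either are far apart relative to their size, and then the gap of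
`exists_half_norm_add_rpow_le` absorbs `κ * ‖v - w‖ ^ q`, or `‖v - w‖ ^ q` is itself at most
`t ^ q * (‖v‖ ^ q + ‖w‖ ^ q)`. -/
theorem exists_half_norm_add_rpow_add_le (hq : 1 < q) (ht : 0 < t) (ht1 : t ≤ 1) (hc : 0 < c) :
    ∃ κ > 0, ∀ S : Submodule ℝ B, c ≤ fiberModulus (S : Set B) (t / 2) → ∀ v ∈ S, ∀ w ∈ S,
      (‖v + w‖ / 2) ^ q + κ * ‖v - w‖ ^ q ≤ (1 / 2 + κ * t ^ q) * (‖v‖ ^ q + ‖w‖ ^ q) := by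
  obtain ⟨δ, hδ, hgap⟩ := exists_half_norm_add_rpow_le (B := B) hq ht ht1 hc
  refine ⟨δ / 2 / 2 ^ q, by positivity, fun S hS v hv w hw => ?_⟩
  set κ := δ / 2 / 2 ^ q
  have hmax : 0 ≤ max ‖v‖ ‖w‖ := le_max_of_le_left (norm_nonneg v)
  rcases le_total (t * max ‖v‖ ‖w‖) ‖v - w‖ with hfar | hnear
  · have hdiff : κ * ‖v - w‖ ^ q ≤ δ / 2 * (‖v‖ ^ q + ‖w‖ ^ q) :=
      calc κ * ‖v - w‖ ^ q ≤ κ * (2 * max ‖v‖ ‖w‖) ^ q := by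
            gcongr
            linarith [norm_sub_le v w, le_max_left ‖v‖ ‖w‖, le_max_right ‖v‖ ‖w‖]
        _ = δ / 2 * max ‖v‖ ‖w‖ ^ q := by
            rw [Real.mul_rpow zero_le_two hmax, ← mul_assoc, div_mul_cancel₀ _ (by positivity)]
        _ ≤ δ / 2 * (‖v‖ ^ q + ‖w‖ ^ q) := by gcongr; exact max_norm_rpow_le v w
    have hslack : 0 ≤ κ * t ^ q * (‖v‖ ^ q + ‖w‖ ^ q) := by positivity
    linarith [hgap S hS v hv w hw hfar]
  · have hdiff : κ * ‖v - w‖ ^ q ≤ κ * t ^ q * (‖v‖ ^ q + ‖w‖ ^ q) :=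
      calc κ * ‖v - w‖ ^ q ≤ κ * (t * max ‖v‖ ‖w‖) ^ q := by gcongr
        _ = κ * t ^ q * max ‖v‖ ‖w‖ ^ q := by rw [Real.mul_rpow ht.le hmax, mul_assoc]
        _ ≤ κ * t ^ q * (‖v‖ ^ q + ‖w‖ ^ q) := by gcongr; exact max_norm_rpow_le v w
    linarith [half_norm_add_rpow_le hq.le v w]

end PointwiseGap

/-- Bernoulli's inequality turns a gap below `1` for the `q`-th power of `‖v + w‖ / 2` into one
for `‖v + w‖ / 2`. -/
theorem uniformConvexSpace_of_exists_half_norm_add_rpow_add_le {V : Type*}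
    [NormedAddCommGroup V] {q : ℝ} (hq : 1 ≤ q)
    (h : ∀ t, 0 < t → t ≤ 1 → ∃ κ > 0, ∀ v w : V,
      (‖v + w‖ / 2) ^ q + κ * ‖v - w‖ ^ q ≤ (1 / 2 + κ * t ^ q) * (‖v‖ ^ q + ‖w‖ ^ q)) :
    UniformConvexSpace V := by
  refine ⟨fun ε hε => ?_⟩
  obtain ⟨κ, hκ, hpow⟩ := h (min 1 (ε / 4)) (by positivity) (min_le_left _ _)
  have htε : min 1 (ε / 4) ^ q ≤ ε ^ q / 4 :=
    calc min 1 (ε / 4) ^ q ≤ (ε / 4) ^ q := by gcongr; exact min_le_right _ _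
      _ = ε ^ q / 4 ^ q := Real.div_rpow hε.le (by norm_num) q
      _ ≤ ε ^ q / 4 := by gcongr; exact Real.self_le_rpow_of_one_le (by norm_num) hq
  refine ⟨κ * ε ^ q / q, by positivity, fun v hv w hw hvw => ?_⟩
  have hgap : (‖v + w‖ / 2) ^ q ≤ 1 - κ * ε ^ q / 2 := by
    have hvw_rpow : κ * ε ^ q ≤ κ * ‖v - w‖ ^ q := by gcongr
    have hvw_ineq := hpow v w
    rw [hv, hw, Real.one_rpow] at hvw_ineq
    linarith [mul_le_mul_of_nonneg_left htε hκ.le]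
  have hbernoulli : 1 + q * (‖v + w‖ / 2 - 1) ≤ (‖v + w‖ / 2) ^ q := by
    have := one_add_mul_self_le_rpow_one_add
      (by linarith [norm_nonneg (v + w)] : -1 ≤ ‖v + w‖ / 2 - 1) hq
    rwa [add_sub_cancel] at this
  rw [le_sub_iff_add_le, ← le_sub_iff_add_le', div_le_iff₀ (by linarith)]
  linarith

theorem Lp_norm_rpow_eq_integral {X V : Type*} [MeasurableSpace X] {m : Measure X}
    [NormedAddCommGroup V] {p : ℝ≥0∞} (hp0 : p ≠ 0) (hp : p ≠ ∞) (f : Lp V p m) :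
    ‖f‖ ^ p.toReal = ∫ x, ‖f x‖ ^ p.toReal ∂m := by
  have hI : 0 ≤ ∫ x, ‖f x‖ ^ p.toReal ∂m := integral_nonneg fun x => by positivity
  rw [Lp.norm_def, (Lp.memLp f).eLpNorm_eq_integral_rpow_norm hp0 hp,
    ENNReal.toReal_ofReal (Real.rpow_nonneg hI _),
    Real.rpow_inv_rpow hI (ENNReal.toReal_pos hp0 hp).ne']

theorem Lp_half_norm_add_rpow_add_le {X V : Type*} [MeasurableSpace X] {m : Measure X}
    [NormedAddCommGroup V] {p : ℝ≥0∞} (hp0 : p ≠ 0) (hp : p ≠ ∞) {f g : Lp V p m} {κ K : ℝ}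
    (h : ∀ᵐ x ∂m, (‖f x + g x‖ / 2) ^ p.toReal + κ * ‖f x - g x‖ ^ p.toReal ≤
      K * (‖f x‖ ^ p.toReal + ‖g x‖ ^ p.toReal)) :
    (‖f + g‖ / 2) ^ p.toReal + κ * ‖f - g‖ ^ p.toReal ≤
      K * (‖f‖ ^ p.toReal + ‖g‖ ^ p.toReal) := by
  have hint (f : Lp V p m) : Integrable (fun x => ‖f x‖ ^ p.toReal) m :=
    (Lp.memLp f).integrable_norm_rpow hp0 hp
  have hae : ∀ᵐ x ∂m, ‖(f + g) x‖ ^ p.toReal / 2 ^ p.toReal + κ * ‖(f - g) x‖ ^ p.toReal ≤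
      K * (‖f x‖ ^ p.toReal + ‖g x‖ ^ p.toReal) := by
    filter_upwards [h, Lp.coeFn_add f g, Lp.coeFn_sub f g] with x hx hadd hsub
    rwa [hadd, hsub, ← Real.div_rpow (norm_nonneg _) zero_le_two]
  have hI := integral_mono_ae (((hint (f + g)).div_const _).add ((hint (f - g)).const_mul _))
    (((hint f).add (hint g)).const_mul _) hae
  simp only [Pi.add_apply] at hI
  rwa [integral_add ((hint (f + g)).div_const _) ((hint (f - g)).const_mul _), integral_div,
    integral_const_mul, integral_const_mul, integral_add (hint f) (hint g),
    ← Lp_norm_rpow_eq_integral hp0 hp, ← Lp_norm_rpow_eq_integral hp0 hp,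
    ← Lp_norm_rpow_eq_integral hp0 hp, ← Lp_norm_rpow_eq_integral hp0 hp,
    ← Real.div_rpow (show 0 ≤ ‖f + g‖ from ENNReal.toReal_nonneg) zero_le_two] at hI

namespace BanachBundle

variable {X B : Type*} [MeasurableSpace X] {m : Measure X} [NormedAddCommGroup B]
  [NormedSpace ℝ B] {p : ℝ≥0∞} [Fact (1 ≤ p)]

/-- Uniform convexity of the fibers with an essential lower bound on the moduli, i.e.
`ess inf_x δ_{E(x)}(ε) > 0` for every `ε ∈ (0, 2]`. The bound is spelled out with a witness `c`
in place of an essential infimum. -/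
def IsUniformlyConvex (E : BanachBundle X B) (m : Measure X) : Prop :=
  ∀ ε ∈ Set.Ioc (0 : ℝ) 2, ∃ c > (0 : ℝ), ∀ᵐ x ∂m, c ≤ fiberModulus (E.fiber x : Set B) ε

theorem isClosed_sections (E : BanachBundle X B) :
    IsClosed (E.sections m p : Set (Lp B p m)) := by
  refine isClosed_of_closure_subset fun f hf => ?_
  obtain ⟨u, hu, hlim⟩ := mem_closure_iff_seq_limit.1 hf
  obtain ⟨φ, -, hφ⟩ := (tendstoInMeasure_of_tendsto_Lp hlim).exists_seq_tendsto_ae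
  have hmem : ∀ᵐ x ∂m, ∀ n, (u n : X → B) x ∈ E.fiber x := ae_all_iff.2 hu
  filter_upwards [hφ, hmem] with x hx hux
  exact (E.isClosed_fiber x).mem_of_tendsto hx (.of_forall fun n => hux (φ n))

theorem IsUniformlyConvex.uniformConvexSpace_sections {E : BanachBundle X B}
    (h : E.IsUniformlyConvex m) (hp1 : 1 < p) (hp : p ≠ ∞) :
    UniformConvexSpace (E.sections m p) := by
  have hq : 1 < p.toReal := by simpa using (ENNReal.toReal_lt_toReal ENNReal.one_ne_top hp).2 hp1
  refine uniformConvexSpace_of_exists_half_norm_add_rpow_add_le hq.le fun t ht ht1 => ?_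
  obtain ⟨c, hc, hcE⟩ := h (t / 2) ⟨half_pos ht, by linarith⟩
  obtain ⟨κ, hκ, hineq⟩ := exists_half_norm_add_rpow_add_le (B := B) hq ht ht1 hc
  refine ⟨κ, hκ, fun f g => ?_⟩
  refine Lp_half_norm_add_rpow_add_le (zero_lt_one.trans hp1).ne' hp ?_
  filter_upwards [hcE, f.2, g.2] with x hx hf hg
  exact hineq (E.fiber x) hx _ hf _ hg

end BanachBundle

section Selection

/-- Weak measurability of a multivalued map: its lower inverse image of every open set is
measurable. This is the condition in `BanachBundle.weaklyMeasurable` for values that are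
arbitrary subsets, as needed by the Kuratowski–Ryll-Nardzewski selection theorem. -/
def IsWeaklyMeasurable {X Y : Type*} [MeasurableSpace X] [TopologicalSpace Y]
    (F : X → Set Y) : Prop :=
  ∀ U, IsOpen U → MeasurableSet {x | (F x ∩ U).Nonempty}

variable {X Y : Type*} [MeasurableSpace X]

theorem exists_measurable_forall_of_forall_exists_nat {Z : Type*} [MeasurableSpace Z] (b : ℕ → Z)
    {P : X → Z → Prop} (hP : ∀ k, MeasurableSet {x | P x (b k)}) (hex : ∀ x, ∃ k, P x (b k)) :
    ∃ s : X → Z, Measurable s ∧ ∀ x, P x (s x) := by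
  classical
  exact ⟨fun x => b (Nat.find (hex x)),
    (measurable_from_nat (f := b)).comp (measurable_find hex hP),
    fun x => Nat.find_spec (hex x)⟩

theorem IsWeaklyMeasurable.ite [TopologicalSpace Y] {F G : X → Set Y} {A : Set X}
    [DecidablePred (· ∈ A)] (hA : MeasurableSet A) (hF : IsWeaklyMeasurable F)
    (hG : IsWeaklyMeasurable G) :
    IsWeaklyMeasurable fun x => if x ∈ A then F x else G x := by
  intro U hU
  convert MeasurableSet.ite hA (hF U hU) (hG U hU) using 1
  ext x
  by_cases hx : x ∈ A <;> simp [hx, Set.ite]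

theorem IsWeaklyMeasurable.closure_inter [TopologicalSpace Y] {F : X → Set Y}
    (hF : IsWeaklyMeasurable F) {U : Set Y} (hU : IsOpen U) :
    IsWeaklyMeasurable fun x => closure (F x ∩ U) := by
  intro V hV
  simpa only [closure_inter_open_nonempty_iff hV, Set.inter_assoc] using hF _ (hU.inter hV)

variable [PseudoMetricSpace Y] [TopologicalSpace.SeparableSpace Y] [MeasurableSpace Y]
  [BorelSpace Y] {F : X → Set Y}

open Metric

theorem IsWeaklyMeasurable.exists_measurable_inter_ball_nonempty (hF : IsWeaklyMeasurable F)
    {s : X → Y} (hs : Measurable s) {r r' : ℝ} (hr' : 0 < r')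
    (hsr : ∀ x, (F x ∩ ball (s x) r).Nonempty) :
    ∃ s' : X → Y, Measurable s' ∧ ∀ x, (F x ∩ ball (s' x) r').Nonempty ∧
      dist (s x) (s' x) < r + r' := by
  rcases isEmpty_or_nonempty X with hX | ⟨⟨x₀⟩⟩
  · exact ⟨s, hs, isEmptyElim⟩
  have : Nonempty Y := ⟨s x₀⟩
  refine exists_measurable_forall_of_forall_exists_nat (TopologicalSpace.denseSeq Y)
    (P := fun x y => (F x ∩ ball y r').Nonempty ∧ dist (s x) y < r + r') (fun k => ?_)
    fun x => ?_
  · exact (hF _ isOpen_ball).inter (measurableSet_lt (hs.dist measurable_const) measurable_const)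
  · obtain ⟨y, hyF, hy⟩ := hsr x
    obtain ⟨k, hk⟩ := (TopologicalSpace.denseRange_denseSeq Y).exists_dist_lt y hr'
    exact ⟨k, ⟨y, hyF, hk⟩,
      (dist_triangle _ y _).trans_lt (add_lt_add (mem_ball'.1 hy) hk)⟩

theorem IsWeaklyMeasurable.exists_seq_measurable_inter_ball_nonempty (hF : IsWeaklyMeasurable F)
    (hne : ∀ x, (F x).Nonempty) :
    ∃ u : ℕ → X → Y, (∀ n, Measurable (u n)) ∧ ∀ n x,
      (F x ∩ ball (u n x) ((1 / 2) ^ n)).Nonempty ∧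
        dist (u n x) (u (n + 1) x) ≤ 2 * (1 / 2) ^ n := by
  let IsApprox (n : ℕ) (s : X → Y) : Prop :=
    Measurable s ∧ ∀ x, (F x ∩ ball (s x) ((1 / 2) ^ n)).Nonempty
  obtain ⟨s₀, hs₀⟩ : ∃ s, IsApprox 0 s := by
    rcases isEmpty_or_nonempty Y with hY | hY
    · have : IsEmpty X := ⟨fun x => hY.elim (hne x).some⟩
      exact ⟨isEmptyElim, measurable_of_empty _, isEmptyElim⟩
    · refine exists_measurable_forall_of_forall_exists_nat (TopologicalSpace.denseSeq Y)
        (P := fun x y => (F x ∩ ball y ((1 / 2) ^ 0)).Nonempty)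
        (fun k => hF _ isOpen_ball) fun x => ?_
      obtain ⟨y, hy⟩ := hne x
      obtain ⟨k, hk⟩ := (TopologicalSpace.denseRange_denseSeq Y).exists_dist_lt y
        (by norm_num : (0 : ℝ) < (1 / 2) ^ 0)
      exact ⟨k, y, hy, hk⟩
  have hstep (n : ℕ) (s : {s // IsApprox n s}) : ∃ s' : {s // IsApprox (n + 1) s},
      ∀ x, dist (s.1 x) (s'.1 x) ≤ 2 * (1 / 2) ^ n := by
    obtain ⟨s', hs', hF_s'⟩ := hF.exists_measurable_inter_ball_nonempty s.2.1
      (by positivity : 0 < (1 / 2 : ℝ) ^ (n + 1)) s.2.2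
    refine ⟨⟨s', hs', fun x => (hF_s' x).1⟩, fun x => (hF_s' x).2.le.trans ?_⟩
    linarith [pow_le_pow_of_le_one (one_half_pos (α := ℝ)).le one_half_lt_one.le
      (n.le_add_right 1)]
  choose next hnext using hstep
  let u (n : ℕ) : {s // IsApprox n s} := Nat.rec ⟨s₀, hs₀⟩ next n
  exact ⟨fun n => (u n).1, fun n => (u n).2.1, fun n x => ⟨(u n).2.2 x, hnext n (u n) x⟩⟩

theorem IsWeaklyMeasurable.exists_measurable_forall_mem [CompleteSpace Y]
    (hF : IsWeaklyMeasurable F) (hclosed : ∀ x, IsClosed (F x)) (hne : ∀ x, (F x).Nonempty) :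
    ∃ f : X → Y, Measurable f ∧ ∀ x, f x ∈ F x := by
  obtain ⟨u, hu, hF_u⟩ := hF.exists_seq_measurable_inter_ball_nonempty hne
  have hlim (x : X) : ∃ y, Filter.Tendsto (u · x) Filter.atTop (nhds y) :=
    cauchySeq_tendsto_of_complete
      (cauchySeq_of_le_geometric _ 2 one_half_lt_one fun n => (hF_u n x).2)
  choose f hf using hlim
  refine ⟨f, measurable_of_tendsto_metrizable hu (tendsto_pi_nhds.2 hf), fun x => ?_⟩
  choose z hzF hz using fun n => (hF_u n x).1
  have hdist : Filter.Tendsto (fun n => dist (u n x) (z n)) Filter.atTop (nhds 0) :=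
    squeeze_zero (fun _ => dist_nonneg) (fun n => (mem_ball'.1 (hz n)).le)
      (tendsto_pow_atTop_nhds_zero_of_lt_one one_half_pos.le one_half_lt_one)
  exact (hclosed x).mem_of_tendsto ((tendsto_iff_of_dist hdist).1 (hf x)) (.of_forall hzF)

theorem IsWeaklyMeasurable.exists_measurable_forall_mem_closure [CompleteSpace Y]
    (hF : IsWeaklyMeasurable F) (hclosed : ∀ x, IsClosed (F x)) (hne : ∀ x, (F x).Nonempty)
    {U : Set Y} (hU : IsOpen U) :
    ∃ f : X → Y, Measurable f ∧ (∀ x, f x ∈ F x) ∧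
      ∀ x, (F x ∩ U).Nonempty → f x ∈ closure U := by
  classical
  obtain ⟨f, hf, hfF⟩ := ((hF.closure_inter hU).ite (hF U hU) hF).exists_measurable_forall_mem
    (fun x => by split_ifs; exacts [isClosed_closure, hclosed x])
    (fun x => by split_ifs with hx; exacts [closure_nonempty_iff.2 hx, hne x])
  refine ⟨f, hf, fun x => ?_, fun x hx => ?_⟩
  · have hx := hfF x
    split_ifs at hx
    exacts [closure_minimal Set.inter_subset_left (hclosed x) hx, hx]
  · have hfx : f x ∈ closure (F x ∩ U) := by
      simpa only [Set.mem_ofPred_eq, hx, if_true] using hfF x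
    exact closure_mono Set.inter_subset_right hfx

end Selection

theorem const_smul_indicatorConstLp {X 𝕜 V : Type*} [MeasurableSpace X] {m : Measure X}
    [NormedRing 𝕜] [NormedAddCommGroup V] [Module 𝕜 V] [IsBoundedSMul 𝕜 V] {p : ℝ≥0∞} {A : Set X}
    (hA : MeasurableSet A) (hAm : m A ≠ ∞) (r : 𝕜) (v : V) :
    r • indicatorConstLp p hA hAm v = indicatorConstLp p hA hAm (r • v) := by
  simp only [indicatorConstLp, ← MemLp.toLp_const_smul, Set.indicator_const_smul]
  rfl

section UnitIndicator

variable {X : Type*} [MeasurableSpace X] {m : Measure X} {A : Set X}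

/-- The constant sections over a set `A` of finite positive measure as an isometric copy of `V`
in `L^p(m; V)`: the vector `v` is sent to `m(A) ^ (-1/p) • 1_A v`. For `p = ∞` the junk value
`p.toReal = 0` makes the scaling factor `1`, as it should be. -/
noncomputable def unitIndicatorLp (V : Type*) [NormedAddCommGroup V] [NormedSpace ℝ V]
    (p : ℝ≥0∞) [Fact (1 ≤ p)] (hA : MeasurableSet A) (hA0 : m A ≠ 0) (hAm : m A ≠ ∞) :
    V →ₗᵢ[ℝ] Lp V p m where
  toFun v := (m.real A ^ (1 / p.toReal))⁻¹ • indicatorConstLp p hA hAm v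
  map_add' v w := by rw [← smul_add, indicatorConstLp_add]
  map_smul' r v := by
    rw [RingHom.id_apply, smul_comm r, const_smul_indicatorConstLp hA hAm r v]
  norm_map' v := by
    have hM : 0 < m.real A ^ (1 / p.toReal) :=
      Real.rpow_pos_of_pos (ENNReal.toReal_pos hA0 hAm) _
    change ‖(m.real A ^ (1 / p.toReal))⁻¹ • indicatorConstLp p hA hAm v‖ = ‖v‖
    rw [norm_smul_of_nonneg (inv_nonneg.2 hM.le),
      norm_indicatorConstLp' (zero_lt_one.trans_le Fact.out).ne' hA0, mul_comm ‖v‖,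
      inv_mul_cancel_left₀ hM.ne']

theorem unitIndicatorLp_coeFn {V : Type*} [NormedAddCommGroup V] [NormedSpace ℝ V]
    {p : ℝ≥0∞} [Fact (1 ≤ p)] (hA : MeasurableSet A) (hA0 : m A ≠ 0) (hAm : m A ≠ ∞) (v : V) :
    unitIndicatorLp V p hA hA0 hAm v =ᵐ[m]
      A.indicator fun _ => (m.real A ^ (1 / p.toReal))⁻¹ • v := by
  change ((m.real A ^ (1 / p.toReal))⁻¹ • indicatorConstLp p hA hAm v : Lp V p m) =ᵐ[m] _
  rw [const_smul_indicatorConstLp]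
  exact indicatorConstLp_coeFn

end UnitIndicator

/-- Semifiniteness of a measure: every measurable set of positive measure contains one of finite
positive measure. On such subsets the indicators that carry `B` into `L^p(m; B)` can be
normalized. -/
def IsSemifinite {X : Type*} [MeasurableSpace X] (m : Measure X) : Prop :=
  ∀ ⦃s : Set X⦄, MeasurableSet s → m s ≠ 0 → ∃ t ⊆ s, MeasurableSet t ∧ m t ≠ 0 ∧ m t ≠ ∞

theorem isSemifinite_of_sigmaFinite {X : Type*} [MeasurableSpace X] (m : Measure X)
    [SigmaFinite m] : IsSemifinite m := fun _ hs hs0 =>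
  have ⟨t, ht, hts, ht0, htop⟩ :=
    Measure.exists_subset_measure_lt_top hs (pos_iff_ne_zero.2 hs0)
  ⟨t, hts, ht, ht0.ne', htop.ne⟩

namespace BanachBundle

open Metric

variable {X B : Type*} [MeasurableSpace X] {m : Measure X} [NormedAddCommGroup B]
  [NormedSpace ℝ B] {p : ℝ≥0∞} [Fact (1 ≤ p)] {A : Set X} {τ : ℝ} {v w : B}

theorem exists_section_norm_sub_le (E : BanachBundle X B) (hA : MeasurableSet A) (hA0 : m A ≠ 0)
    (hAm : m A ≠ ∞) {s : X → B} (hs : StronglyMeasurable s) (hsE : ∀ x, s x ∈ E.fiber x)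
    (hτ : 0 ≤ τ) (hsv : ∀ x ∈ A, ‖s x - v‖ ≤ τ) :
    ∃ f : E.sections m p, ‖(f : Lp B p m) - unitIndicatorLp B p hA hA0 hAm v‖ ≤ τ := by
  let h : X → B := A.indicator fun x => (m.real A ^ (1 / p.toReal))⁻¹ • (s x - v)
  have hh_le : ∀ᵐ x ∂m, ‖h x‖ ≤ ‖unitIndicatorLp ℝ p hA hA0 hAm τ x‖ := by
    filter_upwards [unitIndicatorLp_coeFn (p := p) hA hA0 hAm τ] with x hx
    by_cases hxA : x ∈ A
    · simp only [hx, h, Set.indicator_of_mem hxA, norm_smul, Real.norm_of_nonneg hτ]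
      gcongr
      exact hsv x hxA
    · simp [h, hxA]
  have hh : MemLp h p m := (Lp.memLp _).of_le
    (((hs.sub stronglyMeasurable_const).const_smul _).indicator hA).aestronglyMeasurable hh_le
  refine ⟨⟨unitIndicatorLp B p hA hA0 hAm v + hh.toLp h, ?_⟩, ?_⟩
  · filter_upwards [unitIndicatorLp_coeFn (p := p) hA hA0 hAm v, hh.coeFn_toLp,
      Lp.coeFn_add (unitIndicatorLp B p hA hA0 hAm v) (hh.toLp h)] with x hconst hpert hadd
    rw [hadd, Pi.add_apply, hconst, hpert]
    by_cases hxA : x ∈ A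
    · simpa [h, hxA, ← smul_add] using (E.fiber x).smul_mem _ (hsE x)
    · simp [h, hxA]
  · calc ‖unitIndicatorLp B p hA hA0 hAm v + hh.toLp h - unitIndicatorLp B p hA hA0 hAm v‖
        = ‖hh.toLp h‖ := by rw [add_sub_cancel_left]
      _ ≤ ‖unitIndicatorLp ℝ p hA hA0 hAm τ‖ := Lp.norm_le_norm_of_ae_le <| by
          filter_upwards [hh.coeFn_toLp, hh_le] with x hx hle
          rwa [hx]
      _ = τ := by rw [LinearIsometry.norm_map, Real.norm_of_nonneg hτ]

variable [CompleteSpace B] [TopologicalSpace.SeparableSpace B]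

theorem exists_stronglyMeasurable_section (E : BanachBundle X B) (v : B) (τ : ℝ) :
    ∃ s : X → B, StronglyMeasurable s ∧ (∀ x, s x ∈ E.fiber x) ∧
      ∀ x, ((E.fiber x : Set B) ∩ ball v τ).Nonempty → ‖s x - v‖ ≤ τ := by
  borelize B
  have hE : IsWeaklyMeasurable fun x => (E.fiber x : Set B) := E.weaklyMeasurable
  obtain ⟨s, hs, hsE, hsv⟩ := hE.exists_measurable_forall_mem_closure E.isClosed_fiber
    (fun x => (E.fiber x).nonempty) (isOpen_ball (x := v) (ε := τ))
  exact ⟨s, hs.stronglyMeasurable, hsE, fun x hx =>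
    mem_closedBall_iff_norm.1 (closure_ball_subset_closedBall (hsv x hx))⟩

theorem exists_section_norm_le_one (E : BanachBundle X B) (hA : MeasurableSet A)
    (hA0 : m A ≠ 0) (hAm : m A ≠ ∞) (hv : ‖v‖ = 1) (hτ : 0 ≤ τ)
    (hAv : ∀ x ∈ A, ((E.fiber x : Set B) ∩ ball v τ).Nonempty) :
    ∃ f : E.sections m p, ‖f‖ ≤ 1 ∧
      ‖(f : Lp B p m) - unitIndicatorLp B p hA hA0 hAm v‖ ≤ 2 * τ := by
  obtain ⟨s, hs, hsE, hsv⟩ := E.exists_stronglyMeasurable_section v τ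
  obtain ⟨f, hf⟩ := E.exists_section_norm_sub_le (p := p) hA hA0 hAm hs hsE hτ
    fun x hx => hsv x (hAv x hx)
  have hnormalize := norm_normalize_sub_le (v := (f : Lp B p m))
    ((LinearIsometry.norm_map (unitIndicatorLp B p hA hA0 hAm) v).trans hv)
  exact ⟨normalize f, norm_normalize_le_one f, hnormalize.trans (by gcongr)⟩

theorem measure_inter_ball_nonempty_eq_zero (hm : IsSemifinite m) (E : BanachBundle X B)
    {ε δ : ℝ} (hconv : ∀ ⦃f : E.sections m p⦄, ‖f‖ ≤ 1 → ∀ ⦃g⦄, ‖g‖ ≤ 1 → ε ≤ ‖f - g‖ →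
      ‖f + g‖ ≤ 2 - δ) (hτ : 0 ≤ τ) (hv : ‖v‖ = 1) (hw : ‖w‖ = 1)
    (hsub : ε + 4 * τ ≤ ‖v - w‖) (hadd : 2 - δ + 4 * τ < ‖v + w‖) :
    m {x | ((E.fiber x : Set B) ∩ ball v τ).Nonempty ∧
      ((E.fiber x : Set B) ∩ ball w τ).Nonempty} = 0 := by
  by_contra hpos
  obtain ⟨A, hAvw, hA, hA0, hAm⟩ := hm
    ((E.weaklyMeasurable _ isOpen_ball).inter (E.weaklyMeasurable _ isOpen_ball)) hpos
  obtain ⟨f, hf, hfv⟩ := E.exists_section_norm_le_one (p := p) hA hA0 hAm hv hτ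
    fun x hx => (hAvw hx).1
  obtain ⟨g, hg, hgw⟩ := E.exists_section_norm_le_one (p := p) hA hA0 hAm hw hτ
    fun x hx => (hAvw hx).2
  set φ := unitIndicatorLp B p hA hA0 hAm
  rw [norm_sub_rev] at hfv hgw
  have hfg_sub : ‖v - w‖ ≤ ‖f - g‖ + 4 * τ :=
    calc ‖v - w‖ = ‖φ v - φ w‖ := by rw [← map_sub, φ.norm_map]
      _ ≤ ‖f - g‖ + ‖φ v - f‖ + ‖φ w - g‖ :=
        norm_sub_le_norm_sub_add_norm_sub_add_norm_sub _ _ (f : Lp B p m) g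
      _ ≤ ‖f - g‖ + 4 * τ := by linarith
  have hfg_add : ‖v + w‖ ≤ ‖f + g‖ + 4 * τ :=
    calc ‖v + w‖ = ‖φ v + φ w‖ := by rw [← map_add, φ.norm_map]
      _ ≤ ‖f + g‖ + ‖φ v - f‖ + ‖φ w - g‖ :=
        norm_add_le_norm_add_add_norm_sub _ _ (f : Lp B p m) g
      _ ≤ ‖f + g‖ + 4 * τ := by linarith
  linarith [hconv hf hg (by linarith)]

theorem isUniformlyConvex_of_uniformConvexSpace_sections (hm : IsSemifinite m)
    (E : BanachBundle X B) [UniformConvexSpace (E.sections m p)] : E.IsUniformlyConvex m := by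
  intro ε hε
  obtain ⟨δ, hδ, hconv⟩ :=
    exists_forall_closed_ball_dist_add_le_two_sub (E.sections m p) (half_pos hε.1)
  obtain ⟨τ, hτ, hτε, hτδ⟩ : ∃ τ > 0, 12 * τ ≤ ε ∧ 12 * τ ≤ δ :=
    ⟨min ε δ / 12, div_pos (lt_min hε.1 hδ) (by norm_num), by linarith [min_le_left ε δ],
      by linarith [min_le_right ε δ]⟩
  obtain ⟨D, hD, hDcount, hDdense⟩ :=
    (TopologicalSpace.IsSeparable.of_separableSpace
      (sphere (0 : B) 1)).exists_countable_dense_subset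
  have hae : ∀ᵐ x ∂m, ∀ v ∈ D, ∀ w ∈ D, ε / 2 + 4 * τ ≤ ‖v - w‖ → 2 - δ + 4 * τ < ‖v + w‖ →
      ¬(((E.fiber x : Set B) ∩ ball v τ).Nonempty ∧
        ((E.fiber x : Set B) ∩ ball w τ).Nonempty) := by
    simp only [ae_ball_iff hDcount, Filter.eventually_imp_distrib_left]
    intro v hv w hw hsub hadd
    exact measure_eq_zero_iff_ae_notMem.1 <| E.measure_inter_ball_nonempty_eq_zero hm hconv hτ.le
      (mem_sphere_zero_iff_norm.1 (hD hv)) (mem_sphere_zero_iff_norm.1 (hD hw)) hsub hadd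
  refine ⟨min 1 (δ / 4), by positivity, ?_⟩
  filter_upwards [hae] with x hx
  refine le_fiberModulus_iff.2 ⟨min_le_left _ _, fun v hv w hw hv1 hw1 hvw => ?_⟩
  by_contra! hadd
  obtain ⟨v₀, hv₀, hvv₀⟩ := Metric.mem_closure_iff.1
    (hDdense (mem_sphere_zero_iff_norm.2 hv1)) τ hτ
  obtain ⟨w₀, hw₀, hww₀⟩ := Metric.mem_closure_iff.1
    (hDdense (mem_sphere_zero_iff_norm.2 hw1)) τ hτ
  rw [dist_eq_norm] at hvv₀ hww₀
  refine hx v₀ hv₀ w₀ hw₀ ?_ ?_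
    ⟨⟨v, hv, mem_ball_iff_norm.2 hvv₀⟩, ⟨w, hw, mem_ball_iff_norm.2 hww₀⟩⟩
  · linarith [norm_sub_le_norm_sub_add_norm_sub_add_norm_sub v w v₀ w₀]
  · linarith [norm_add_le_norm_add_add_norm_sub v w v₀ w₀, min_le_right 1 (δ / 4)]

end BanachBundle

theorem uniformly_convex_bundle_iff_sections_general {X B : Type*} [MeasurableSpace X]
    {m : Measure X} (hm : IsSemifinite m) [NormedAddCommGroup B] [NormedSpace ℝ B]
    [CompleteSpace B] [TopologicalSpace.SeparableSpace B] (E : BanachBundle X B) :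
    (E.IsUniformlyConvex m → ∀ (p : ℝ≥0∞) (_ : Fact (1 ≤ p)), 1 < p → p ≠ ∞ →
      CompleteSpace (E.sections m p) ∧ UniformConvexSpace (E.sections m p)) ∧
    ∀ (p : ℝ≥0∞) (_ : Fact (1 ≤ p)),
      UniformConvexSpace (E.sections m p) → E.IsUniformlyConvex m :=
  ⟨fun h _ _ hp1 hp =>
      ⟨E.isClosed_sections.completeSpace_coe, h.uniformConvexSpace_sections hp1 hp⟩,
    fun p _ _ => E.isUniformlyConvex_of_uniformConvexSpace_sections (p := p) hm⟩

/-- Uniformly convex bundles/modules. If the fibers of a Banach bundle are uniformly convex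
with a uniform (essential) lower bound on the modulus of convexity, then every section space
`Γ_p(E)`, `p ∈ (1,∞)`, is a uniformly convex Banach space; conversely, if `Γ_p(E)` is
uniformly convex for some `p ∈ (1,∞)`, then `ess inf_x δ_{E(x)}(ε) > 0` for every
`ε ∈ (0,2]`. -/
theorem uniformly_convex_bundle_iff_sections
    {X B : Type*} [MeasurableSpace X] (m : Measure X) [SigmaFinite m]
    [NormedAddCommGroup B] [NormedSpace ℝ B] [CompleteSpace B]
    [TopologicalSpace.SeparableSpace B]
    (E : BanachBundle X B) :
    ((∀ ε ∈ Set.Ioc (0 : ℝ) 2, ∃ c > (0 : ℝ),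
        ∀ᵐ x ∂m, c ≤ fiberModulus (E.fiber x : Set B) ε) →
      ∀ (p : ℝ≥0∞) (_ : Fact (1 ≤ p)), 1 < p → p ≠ ∞ →
        CompleteSpace ↥(E.sections m p) ∧ UniformConvexSpace ↥(E.sections m p)) ∧
    (∀ (p : ℝ≥0∞) (_ : Fact (1 ≤ p)), 1 < p → p ≠ ∞ →
      UniformConvexSpace ↥(E.sections m p) →
        ∀ ε ∈ Set.Ioc (0 : ℝ) 2, ∃ c > (0 : ℝ),
          ∀ᵐ x ∂m, c ≤ fiberModulus (E.fiber x : Set B) ε) := by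
  have h := uniformly_convex_bundle_iff_sections_general (isSemifinite_of_sigmaFinite m) E
  exact ⟨h.1, fun p hp _ _ => h.2 p hp⟩
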